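/- Let R_1, …, R_n (n ≥ 1) be a side-attachment sequence of axis-parallel rectangles. Then every maximal internal line segment of the rectangular tiling (R_1,…,R_n) of U_n = R_1 ∪ ⋯ ∪ R_n is equal to a side of at least one of the rectangles R_j. -/

import Mathlib

/-!
Let `U j` be the rectangle `R 0 ∪ ⋯ ∪ R j`, and let `s` be the relative interior of an internal
segment, say a vertical one. It avoids the interior of every `R i`, so it is not contained in the
interior of `U 0 = R 0`. Since `s` lies in the interior of the whole tiled rectangle, there is a `k`
such that it lies in the interior of `U (k + 1)` but not in that of `U k`. Since `U k` does not
exhaust `U (k + 1)`, it contains no two opposite corners of `U (k + 1)`; hence `R (k + 1)` contains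
a corner from each diagonal and spans `U (k + 1)` from side to side in one direction. A point of `s`
outside the interior of `U k` lies on the boundary of `R (k + 1)`. If `R (k + 1)` spans
horizontally, then this point is on its top or bottom side, and `s` crosses into its interior, which
is impossible. So it spans vertically, and `s` is contained in a vertical side of `R (k + 1)`, which
is itself an internal segment. By maximality the closed segment is equal to this side.
-/

open Set

/-- An axis-parallel rectangle `[x1,x2] × [y1,y2]` with `x1 < x2` and `y1 < y2`. -/
structure Rect where
  x1 : ℝ
  x2 : ℝ
  y1 : ℝ
  y2 : ℝ
  hx : x1 < x2
  hy : y1 < y2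

namespace Rect

/-- The rectangle as a subset of the plane. -/
def toSet (R : Rect) : Set (ℝ × ℝ) := Set.Icc R.x1 R.x2 ×ˢ Set.Icc R.y1 R.y2

/-- The area of the rectangle. -/
noncomputable def area (R : Rect) : ℝ := (R.x2 - R.x1) * (R.y2 - R.y1)

end Rect

/-- Vertical closed segment `{x} × [c,d]`. -/
def vseg (x c d : ℝ) : Set (ℝ × ℝ) := ({x} : Set ℝ) ×ˢ Set.Icc c d

/-- Horizontal closed segment `[a,b] × {y}`. -/
def hseg (a b y : ℝ) : Set (ℝ × ℝ) := Set.Icc a b ×ˢ ({y} : Set ℝ)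

/-- Relative interior of a vertical segment. -/
def vsegOpen (x c d : ℝ) : Set (ℝ × ℝ) := ({x} : Set ℝ) ×ˢ Set.Ioo c d

/-- Relative interior of a horizontal segment. -/
def hsegOpen (a b y : ℝ) : Set (ℝ × ℝ) := Set.Ioo a b ×ˢ ({y} : Set ℝ)

/-- `S` is one of the four sides of the rectangle `R`. -/
def Rect.IsSide (R : Rect) (S : Set (ℝ × ℝ)) : Prop :=
  S = vseg R.x1 R.y1 R.y2 ∨ S = vseg R.x2 R.y1 R.y2 ∨
  S = hseg R.x1 R.x2 R.y1 ∨ S = hseg R.x1 R.x2 R.y2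

/-- A rectangular tiling: a finite family of axis-parallel rectangles with pairwise
disjoint interiors whose union is an axis-parallel rectangle `F`. -/
structure Tiling (I : Type*) [Fintype I] where
  R : I → Rect
  F : Rect
  disj : Pairwise fun i j => interior ((R i).toSet) ∩ interior ((R j).toSet) = ∅
  union : (⋃ i, (R i).toSet) = F.toSet

variable {I : Type*} [Fintype I]

/-- An internal line segment of a tiling: a horizontal or vertical closed segment of
positive length contained in the union of the boundaries of the rectangles, whose
relative interior lies in the topological interior of the bounding rectangle. -/
def IsInternalSeg (T : Tiling I) (S : Set (ℝ × ℝ)) : Prop :=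
  (∃ x c d : ℝ, c < d ∧ S = vseg x c d ∧
      S ⊆ (⋃ i, frontier ((T.R i).toSet)) ∧ vsegOpen x c d ⊆ interior T.F.toSet) ∨
  (∃ a b y : ℝ, a < b ∧ S = hseg a b y ∧
      S ⊆ (⋃ i, frontier ((T.R i).toSet)) ∧ hsegOpen a b y ⊆ interior T.F.toSet)

/-- A maximal internal line segment: an internal segment not properly contained in
any other internal segment. -/
def IsMaxInternalSeg (T : Tiling I) (S : Set (ℝ × ℝ)) : Prop :=
  IsInternalSeg T S ∧ ∀ S', IsInternalSeg T S' → S ⊆ S' → S' = S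

/-- `A ∩ B` is a vertical segment of positive length with `A` lying to the left of `B`. -/
def LeftAdj (A B : Rect) : Prop :=
  A.x2 = B.x1 ∧ ∃ c d : ℝ, c < d ∧ A.toSet ∩ B.toSet = vseg A.x2 c d

/-- `A ∩ B` is a horizontal segment of positive length with `A` lying below `B`. -/
def BelowAdj (A B : Rect) : Prop :=
  A.y2 = B.y1 ∧ ∃ a b : ℝ, a < b ∧ A.toSet ∩ B.toSet = hseg a b A.y2

/-- `A` meets the left side of `F` in a segment of positive length. -/
def MeetsLeftSide (A F : Rect) : Prop :=
  ∃ c d : ℝ, c < d ∧ A.toSet ∩ vseg F.x1 F.y1 F.y2 = vseg F.x1 c d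

/-- `A` meets the right side of `F` in a segment of positive length. -/
def MeetsRightSide (A F : Rect) : Prop :=
  ∃ c d : ℝ, c < d ∧ A.toSet ∩ vseg F.x2 F.y1 F.y2 = vseg F.x2 c d

/-- `A` meets the bottom side of `F` in a segment of positive length. -/
def MeetsBottomSide (A F : Rect) : Prop :=
  ∃ a b : ℝ, a < b ∧ A.toSet ∩ hseg F.x1 F.x2 F.y1 = hseg a b F.y1

/-- `A` meets the top side of `F` in a segment of positive length. -/
def MeetsTopSide (A F : Rect) : Prop :=
  ∃ a b : ℝ, a < b ∧ A.toSet ∩ hseg F.x1 F.x2 F.y2 = hseg a b F.y2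

/-- Two tilings indexed by the same finite set are weakly equivalent. -/
def WeakEquiv (T T' : Tiling I) : Prop :=
  (∀ i j : I, LeftAdj (T.R i) (T.R j) ↔ LeftAdj (T'.R i) (T'.R j)) ∧
  (∀ i j : I, BelowAdj (T.R i) (T.R j) ↔ BelowAdj (T'.R i) (T'.R j)) ∧
  (∀ i : I, MeetsLeftSide (T.R i) T.F ↔ MeetsLeftSide (T'.R i) T'.F) ∧
  (∀ i : I, MeetsRightSide (T.R i) T.F ↔ MeetsRightSide (T'.R i) T'.F) ∧
  (∀ i : I, MeetsTopSide (T.R i) T.F ↔ MeetsTopSide (T'.R i) T'.F) ∧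
  (∀ i : I, MeetsBottomSide (T.R i) T.F ↔ MeetsBottomSide (T'.R i) T'.F)

/-- A tiling is area-universal if every assignment of positive areas to the rectangles
is realized by a weakly equivalent tiling. -/
def AreaUniversal (T : Tiling I) : Prop :=
  ∀ w : I → ℝ, (∀ i, 0 < w i) → ∃ T' : Tiling I, WeakEquiv T T' ∧ ∀ i, (T'.R i).area = w i

/-- A tiling is generic if no point belongs to four or more of the rectangles. -/
def Generic (T : Tiling I) : Prop :=
  ∀ p : ℝ × ℝ, ∀ s : Finset I, (∀ i ∈ s, p ∈ (T.R i).toSet) → s.card ≤ 3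

/-- A side-attachment sequence: rectangles with pairwise disjoint interiors such that
every partial union `U_j = R_0 ∪ ⋯ ∪ R_j` is an axis-parallel rectangle. -/
def SideAttachSeq {n : ℕ} (R : Fin n → Rect) : Prop :=
  (Pairwise fun i j => interior ((R i).toSet) ∩ interior ((R j).toSet) = ∅) ∧
  ∀ j : Fin n, ∃ U : Rect, (⋃ i ∈ Set.Iic j, (R i).toSet) = U.toSet

namespace Rect

lemma isClosed_toSet (R : Rect) : IsClosed R.toSet := isClosed_Icc.prod isClosed_Icc

lemma interior_toSet (R : Rect) : interior R.toSet = Ioo R.x1 R.x2 ×ˢ Ioo R.y1 R.y2 := by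
  rw [toSet, interior_prod_eq, interior_Icc, interior_Icc]

lemma closure_interior_toSet (R : Rect) : closure (interior R.toSet) = R.toSet := by
  rw [interior_toSet, closure_prod_eq, closure_Ioo R.hx.ne, closure_Ioo R.hy.ne, toSet]

lemma frontier_toSet (R : Rect) :
    frontier R.toSet = Icc R.x1 R.x2 ×ˢ {R.y1, R.y2} ∪ {R.x1, R.x2} ×ˢ Icc R.y1 R.y2 := by
  rw [toSet, frontier_prod_eq, closure_Icc, closure_Icc, frontier_Icc R.hx.le,
    frontier_Icc R.hy.le]

lemma IsSide.subset_frontier {R : Rect} {S : Set (ℝ × ℝ)} (hS : R.IsSide S) :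
    S ⊆ frontier R.toSet := by
  rw [frontier_toSet]
  rcases hS with rfl | rfl | rfl | rfl
  · exact subset_union_of_subset_right (prod_mono_left (by simp)) _
  · exact subset_union_of_subset_right (prod_mono_left (by simp)) _
  · exact subset_union_of_subset_left (prod_mono_right (by simp)) _
  · exact subset_union_of_subset_left (prod_mono_right (by simp)) _

lemma vsegOpen_subset_interior_iff (R : Rect) {x c d : ℝ} (hcd : c < d) :
    vsegOpen x c d ⊆ interior R.toSet ↔ x ∈ Ioo R.x1 R.x2 ∧ R.y1 ≤ c ∧ d ≤ R.y2 := by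
  rw [vsegOpen, interior_toSet,
    prod_subset_prod_iff' ((singleton_nonempty x).prod (nonempty_Ioo.2 hcd)),
    singleton_subset_iff, Ioo_subset_Ioo_iff hcd]

/-- The reflection of `R` in the diagonal, used to deduce statements about horizontal segments from
those about vertical ones. -/
def swap (R : Rect) : Rect := ⟨R.y1, R.y2, R.x1, R.x2, R.hy, R.hx⟩

lemma toSet_swap (R : Rect) : R.swap.toSet = Prod.swap ⁻¹' R.toSet :=
  (preimage_swap_prod _ _).symm

lemma interior_toSet_swap (R : Rect) :
    interior R.swap.toSet = Prod.swap ⁻¹' interior R.toSet := by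
  rw [interior_toSet, interior_toSet, preimage_swap_prod, swap]

lemma toSet_subset_iff {V U : Rect} :
    V.toSet ⊆ U.toSet ↔ (U.x1 ≤ V.x1 ∧ V.x2 ≤ U.x2) ∧ U.y1 ≤ V.y1 ∧ V.y2 ≤ U.y2 := by
  rw [toSet, toSet, prod_subset_prod_iff'
    ((nonempty_Icc.2 V.hx.le).prod (nonempty_Icc.2 V.hy.le)),
    Icc_subset_Icc_iff V.hx.le, Icc_subset_Icc_iff V.hy.le]

section Attachment

variable {U R V : Rect}

lemma toSet_subset_of_mem_diagonal_corners (h₁ : (V.x1, V.y1) ∈ U.toSet)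
    (h₂ : (V.x2, V.y2) ∈ U.toSet) :
    V.toSet ⊆ U.toSet :=
  toSet_subset_iff.2 ⟨⟨h₁.1.1, h₂.1.2⟩, h₁.2.1, h₂.2.2⟩

lemma toSet_subset_of_mem_antidiagonal_corners (h₁ : (V.x1, V.y2) ∈ U.toSet)
    (h₂ : (V.x2, V.y1) ∈ U.toSet) :
    V.toSet ⊆ U.toSet :=
  toSet_subset_iff.2 ⟨⟨h₁.1.1, h₂.1.2⟩, h₂.2.1, h₁.2.2⟩

lemma spans_of_subset_union (hV : V.toSet ⊆ U.toSet ∪ R.toSet) (hU : ¬ V.toSet ⊆ U.toSet) :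
    (R.x1 ≤ V.x1 ∧ V.x2 ≤ R.x2) ∨ (R.y1 ≤ V.y1 ∧ V.y2 ≤ R.y2) := by
  have mem_x1 : V.x1 ∈ Icc V.x1 V.x2 := left_mem_Icc.2 V.hx.le
  have mem_x2 : V.x2 ∈ Icc V.x1 V.x2 := right_mem_Icc.2 V.hx.le
  have mem_y1 : V.y1 ∈ Icc V.y1 V.y2 := left_mem_Icc.2 V.hy.le
  have mem_y2 : V.y2 ∈ Icc V.y1 V.y2 := right_mem_Icc.2 V.hy.le
  have diagonal : (V.x1, V.y1) ∈ R.toSet ∨ (V.x2, V.y2) ∈ R.toSet := by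
    by_contra! hR
    exact hU <| toSet_subset_of_mem_diagonal_corners ((hV ⟨mem_x1, mem_y1⟩).resolve_right hR.1)
      ((hV ⟨mem_x2, mem_y2⟩).resolve_right hR.2)
  have antidiagonal : (V.x1, V.y2) ∈ R.toSet ∨ (V.x2, V.y1) ∈ R.toSet := by
    by_contra! hR
    exact hU <| toSet_subset_of_mem_antidiagonal_corners ((hV ⟨mem_x1, mem_y2⟩).resolve_right hR.1)
      ((hV ⟨mem_x2, mem_y1⟩).resolve_right hR.2)
  rcases diagonal with h₁ | h₂ <;> rcases antidiagonal with h₃ | h₄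
  · exact .inr ⟨h₁.2.1, h₃.2.2⟩
  · exact .inl ⟨h₁.1.1, h₄.1.2⟩
  · exact .inl ⟨h₃.1.1, h₂.1.2⟩
  · exact .inr ⟨h₄.2.1, h₂.2.2⟩

theorem vsegOpen_subset_side_of_union {x c d : ℝ} (hcd : c < d) (hV : U.toSet ∪ R.toSet = V.toSet)
    (hsV : vsegOpen x c d ⊆ interior V.toSet) (hsU : ¬ vsegOpen x c d ⊆ interior U.toSet)
    (hsR : Disjoint (vsegOpen x c d) (interior R.toSet)) :
    (x = R.x1 ∨ x = R.x2) ∧ (R.y1 ≤ c ∧ d ≤ R.y2) ∧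
      vsegOpen x R.y1 R.y2 ⊆ interior V.toSet := by
  obtain ⟨⟨x, y⟩, ⟨rfl, hy⟩, hpU⟩ := not_subset.1 hsU
  have hpR : (x, y) ∈ R.toSet :=
    (R.isClosed_toSet.interior_union_right (hV ▸ hsV ⟨rfl, hy⟩)).resolve_left hpU
  obtain ⟨hx, hc, hd⟩ := (V.vsegOpen_subset_interior_iff hcd).1 hsV
  have hVU : ¬ V.toSet ⊆ U.toSet := fun h => hsU (hsV.trans (interior_mono h))
  have hRV := toSet_subset_iff.1 (hV ▸ subset_union_right : R.toSet ⊆ V.toSet)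
  rcases spans_of_subset_union hV.ge hVU with ⟨h₁, h₂⟩ | ⟨h₁, h₂⟩
  · have hy_closure : y ∈ closure (Ioo R.y1 R.y2) := closure_Ioo R.hy.ne ▸ hpR.2
    obtain ⟨y', hy', hy'R⟩ := mem_closure_iff.1 hy_closure _ isOpen_Ioo hy
    have hp' : (x, y') ∈ vsegOpen x c d := ⟨rfl, hy'⟩
    have hp'R : (x, y') ∈ interior R.toSet :=
      R.interior_toSet ▸ ⟨⟨h₁.trans_lt hx.1, hx.2.trans_le h₂⟩, hy'R⟩
    exact (disjoint_left.1 hsR hp' hp'R).elim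
  · refine ⟨?_, ⟨h₁.trans hc, hd.trans h₂⟩,
      (V.vsegOpen_subset_interior_iff R.hy).2 ⟨hx, hRV.2⟩⟩
    by_contra! hne
    refine disjoint_left.1 hsR ⟨rfl, hy⟩ (R.interior_toSet ▸ ⟨?_, ?_⟩)
    · exact ⟨hpR.1.1.lt_of_ne hne.1.symm, hpR.1.2.lt_of_ne hne.2⟩
    · exact ⟨h₁.trans_lt (hc.trans_lt hy.1), (hy.2.trans_le hd).trans_le h₂⟩

theorem hsegOpen_subset_side_of_union {a b y : ℝ} (hab : a < b)
    (hV : U.toSet ∪ R.toSet = V.toSet) (hsV : hsegOpen a b y ⊆ interior V.toSet)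
    (hsU : ¬ hsegOpen a b y ⊆ interior U.toSet)
    (hsR : Disjoint (hsegOpen a b y) (interior R.toSet)) :
    (y = R.y1 ∨ y = R.y2) ∧ (R.x1 ≤ a ∧ b ≤ R.x2) ∧
      hsegOpen R.x1 R.x2 y ⊆ interior V.toSet := by
  have swap_hsegOpen (a b : ℝ) : vsegOpen y a b = Prod.swap ⁻¹' hsegOpen a b y :=
    (preimage_swap_prod _ _).symm
  have swap_subset (W : Rect) (a b : ℝ) :
      vsegOpen y a b ⊆ interior W.swap.toSet ↔ hsegOpen a b y ⊆ interior W.toSet := by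
    rw [swap_hsegOpen, interior_toSet_swap, Prod.swap_surjective.preimage_subset_preimage_iff]
  have hside := vsegOpen_subset_side_of_union (U := U.swap) (R := R.swap) (V := V.swap) hab
    (by rw [toSet_swap, toSet_swap, toSet_swap, ← preimage_union, hV])
    ((swap_subset V a b).2 hsV) (mt (swap_subset U a b).1 hsU)
    (by rw [swap_hsegOpen, interior_toSet_swap]; exact hsR.preimage _)
  rwa [swap_subset] at hside

end Attachment

end Rect

lemma Tiling.disjoint_iUnion_frontier_interior (T : Tiling I) (j : I) :
    Disjoint (⋃ i, frontier (T.R i).toSet) (interior (T.R j).toSet) := by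
  refine disjoint_iUnion_left.2 fun i => ?_
  rcases eq_or_ne i j with rfl | hij
  · exact disjoint_interior_frontier.symm
  · have hdisj := (disjoint_iff_inter_eq_empty.2 (T.disj hij)).closure_left isOpen_interior
    rw [Rect.closure_interior_toSet] at hdisj
    exact hdisj.mono_left (T.R i).isClosed_toSet.frontier_subset

theorem SideAttachSeq.exists_attachment {n : ℕ} {R : Fin (n + 1) → Rect} (h : SideAttachSeq R)
    {s : Set (ℝ × ℝ)} (hs : s.Nonempty) (hsF : s ⊆ interior (⋃ i, (R i).toSet))
    (hsR : ∀ i, Disjoint s (interior (R i).toSet)) :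
    ∃ (k : Fin (n + 1)) (U V : Rect), U.toSet ∪ (R k).toSet = V.toSet ∧
      V.toSet ⊆ ⋃ i, (R i).toSet ∧ s ⊆ interior V.toSet ∧ ¬ s ⊆ interior U.toSet := by
  by_contra hno
  have not_subset (j : Fin (n + 1)) : ¬ s ⊆ interior (⋃ i ∈ Iic j, (R i).toSet) := by
    induction j using Fin.induction with
    | zero =>
      have hIic : Iic (0 : Fin (n + 1)) = {0} := Iic_bot
      rw [hIic, biUnion_singleton]
      exact fun hs0 => hs.ne_empty ((hsR 0).eq_bot_of_le hs0)
    | succ k not_subset_k =>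
      intro hsk
      obtain ⟨U, hU⟩ := h.2 k.castSucc
      obtain ⟨V, hV⟩ := h.2 k.succ
      have hIic : Iic k.succ = insert k.succ (Iic k.castSucc) := by
        ext i
        simp only [mem_insert_iff, mem_Iic, Fin.le_def, Fin.ext_iff, Fin.val_succ,
          Fin.val_castSucc]
        omega
      have hUV : U.toSet ∪ (R k.succ).toSet = V.toSet := by
        rw [← hU, ← hV, hIic, biUnion_insert, union_comm]
      exact hno ⟨k.succ, U, V, hUV, hV ▸ iUnion₂_subset_iUnion _ _, hV ▸ hsk, hU ▸ not_subset_k⟩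
  exact not_subset (Fin.last n) (by simpa [Fin.le_last] using hsF)

theorem IsInternalSeg.exists_isSide {n : ℕ} {T : Tiling (Fin (n + 1))} (h : SideAttachSeq T.R)
    {S : Set (ℝ × ℝ)} (hS : IsInternalSeg T S) :
    ∃ (k : Fin (n + 1)) (S' : Set (ℝ × ℝ)), (T.R k).IsSide S' ∧ IsInternalSeg T S' ∧ S ⊆ S' := by
  have side_subset {k S'} (hS' : (T.R k).IsSide S') : S' ⊆ ⋃ i, frontier (T.R i).toSet :=
    hS'.subset_frontier.trans (subset_iUnion_of_subset k subset_rfl)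
  rcases hS with ⟨x, c, d, hcd, rfl, hfr, hF⟩ | ⟨a, b, y, hab, rfl, hfr, hF⟩
  · have hsR (i) : Disjoint (vsegOpen x c d) (interior (T.R i).toSet) :=
      (T.disjoint_iUnion_frontier_interior i).mono_left
        ((prod_mono_right Ioo_subset_Icc_self).trans hfr)
    obtain ⟨k, U, V, hV, hVF, hsV, hsU⟩ := h.exists_attachment
      ((singleton_nonempty x).prod (nonempty_Ioo.2 hcd)) (T.union ▸ hF) hsR
    obtain ⟨hx, ⟨hc, hd⟩, hint⟩ := Rect.vsegOpen_subset_side_of_union hcd hV hsV hsU (hsR k)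
    have hside : (T.R k).IsSide (vseg x (T.R k).y1 (T.R k).y2) := by
      rcases hx with rfl | rfl
      exacts [.inl rfl, .inr (.inl rfl)]
    exact ⟨k, _, hside,
      .inl ⟨x, _, _, (T.R k).hy, rfl, side_subset hside,
        hint.trans (interior_mono (T.union ▸ hVF))⟩,
      prod_mono_right (Icc_subset_Icc hc hd)⟩
  · have hsR (i) : Disjoint (hsegOpen a b y) (interior (T.R i).toSet) :=
      (T.disjoint_iUnion_frontier_interior i).mono_left
        ((prod_mono_left Ioo_subset_Icc_self).trans hfr)
    obtain ⟨k, U, V, hV, hVF, hsV, hsU⟩ := h.exists_attachment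
      ((nonempty_Ioo.2 hab).prod (singleton_nonempty y)) (T.union ▸ hF) hsR
    obtain ⟨hy, ⟨ha, hb⟩, hint⟩ := Rect.hsegOpen_subset_side_of_union hab hV hsV hsU (hsR k)
    have hside : (T.R k).IsSide (hseg (T.R k).x1 (T.R k).x2 y) := by
      rcases hy with rfl | rfl
      exacts [.inr (.inr (.inl rfl)), .inr (.inr (.inr rfl))]
    exact ⟨k, _, hside,
      .inr ⟨_, _, y, (T.R k).hx, rfl, side_subset hside,
        hint.trans (interior_mono (T.union ▸ hVF))⟩,
      prod_mono_left (Icc_subset_Icc ha hb)⟩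

/-- In the rectangular tiling arising from a side-attachment sequence,
every maximal internal line segment is a side of at least one of the rectangles. -/
theorem sideAttachSeq_maxSeg_is_side
    {n : ℕ} (hn : 1 ≤ n) (T : Tiling (Fin n)) (h : SideAttachSeq T.R)
    (S : Set (ℝ × ℝ)) (hS : IsMaxInternalSeg T S) :
    ∃ j : Fin n, (T.R j).IsSide S := by
  obtain ⟨m, rfl⟩ := Nat.exists_eq_add_of_le' hn
  obtain ⟨k, S', hside, hinternal, hsub⟩ := hS.1.exists_isSide h
  exact ⟨k, hS.2 S' hinternal hsub ▸ hside⟩
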